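/- Let A generate a bounded C₀-semigroup on a Hilbert space H with iℝ ⊂ ρ(A). If there exist constants C, p > 0 such that ‖(iλ - A)⁻¹‖ ≤ C|λ|^p for all real λ with |λ| ≥ 1, then there exists M > 0 such that ‖e^{tA}U‖ ≤ M t^{-1/p} ‖U‖_{D(A)} for all U ∈ D(A) and t ≥ 1. -/

import Mathlib

open Filter

/-!
Rescale time so that `[0, t]` becomes `[0, 1]`: the generator becomes `t A`, and its resolvents
satisfy `min 1 ‖R(iλ)‖ᵏ ≤ c t^(-1/p) (1 + |λ| / t)` as soon as `k ≥ 1/p`. For a smooth cutoff `χ` on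
`(0, 1)` the localized orbits `f_j = χ^(j) T u` satisfy `f_j' = t A f_j + f_{j+1}`, hence
`f̂_j = R f̂_{j+1}` and `f̂_0 = Rᵏ f̂_k`. Therefore
`‖f̂_0‖ ≤ c t^(-1/p) (1 + |λ| / t) (‖f̂_0‖ + ‖f̂_k‖)`, where the weight `|λ| / t` costs one
derivative, that is, one application of `A`. By Plancherel the `L²` norm of the localized orbit is
at most `c t^(-1/p) (‖u‖ + ‖A u‖)`, and boundedness of the semigroup turns this mean estimate into
an estimate at the final time.
-/

open MeasureTheory FourierTransform Set SchwartzMap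
open scoped ContDiff ENNReal Topology

theorem min_one_pow_le_rpow {x q : ℝ} {k : ℕ} (hx : 0 ≤ x) (hq : 0 ≤ q) (hqk : q ≤ k) :
    min 1 (x ^ k) ≤ x ^ q := by
  rcases le_total x 1 with hx1 | hx1
  · calc min 1 (x ^ k) ≤ x ^ (k : ℝ) := by rw [Real.rpow_natCast]; exact min_le_right _ _
      _ ≤ x ^ q := Real.rpow_le_rpow_of_exponent_ge' hx hx1 hq hqk
  · exact (min_le_left _ _).trans (Real.one_le_rpow hx1 hq)

theorem min_one_pow_le_of_le_mul_rpow {x K t b p : ℝ} {k : ℕ} (hx : 0 ≤ x) (hK : 0 ≤ K)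
    (ht : 0 < t) (hb : 0 ≤ b) (hp : 0 < p) (hpk : 1 / p ≤ k) (h : x ≤ t⁻¹ * (K * b ^ p)) :
    min 1 (x ^ k) ≤ K ^ (1 / p) * t ^ (-(1 / p)) * b := by
  have hp' : 0 ≤ 1 / p := by positivity
  calc min 1 (x ^ k) ≤ x ^ (1 / p) := min_one_pow_le_rpow hx hp' hpk
    _ ≤ (t⁻¹ * (K * b ^ p)) ^ (1 / p) := Real.rpow_le_rpow hx h hp'
    _ = K ^ (1 / p) * t ^ (-(1 / p)) * b := by
      rw [Real.mul_rpow (by positivity) (by positivity), Real.mul_rpow hK (by positivity),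
        ← Real.rpow_mul hb, mul_one_div_cancel hp.ne', Real.rpow_one, Real.inv_rpow ht.le,
        Real.rpow_neg ht.le]
      ring

section Resolvent

variable {𝕜 E : Type*} [NontriviallyNormedField 𝕜] [NormedAddCommGroup E] [NormedSpace 𝕜 E]
  {A : E →ₗ.[𝕜] E} {z w : 𝕜} {R S : E →L[𝕜] E}

/-- `R` is the resolvent `(z - A)⁻¹` of the unbounded operator `A`: a bounded two-sided inverse of
`z - A : D(A) → E`. -/
structure IsResolventAt (A : E →ₗ.[𝕜] E) (z : 𝕜) (R : E →L[𝕜] E) : Prop where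
  left_inv : ∀ u : A.domain, R (z • (u : E) - A u) = u
  right_inv : ∀ v : E, ∃ u : A.domain, R v = u ∧ z • (u : E) - A u = v

namespace IsResolventAt

theorem smul (hR : IsResolventAt A z R) {a : 𝕜} (ha : a ≠ 0) :
    IsResolventAt (a • A) (a * z) (a⁻¹ • R) where
  left_inv u := by
    have h : (a * z) • (u : E) - (a • A) u = a • (z • (u : E) - A u) := by
      rw [LinearPMap.smul_apply, mul_smul, smul_sub]
    rw [h, smul_apply, map_smul, inv_smul_smul₀ ha]
    exact hR.left_inv u
  right_inv v := by
    obtain ⟨u, hu, huv⟩ := hR.right_inv (a⁻¹ • v)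
    refine ⟨u, by rw [← hu, map_smul, smul_apply], ?_⟩
    rw [LinearPMap.smul_apply, mul_smul, ← smul_sub]
    rw [huv, smul_inv_smul₀ ha]

theorem sub_eq_smul_mul (hR : IsResolventAt A z R) (hS : IsResolventAt A w S) :
    R - S = (w - z) • (R * S) := by
  ext v
  obtain ⟨u, hu, rfl⟩ := hS.right_inv v
  have h : w • (u : E) - A u = (z • (u : E) - A u) + (w - z) • (u : E) := by module
  rw [sub_apply, smul_apply,
    mul_apply_eq_comp, hu, h, map_add, map_smul, hR.left_inv, add_sub_cancel_left]

theorem norm_le_two_mul (hR : IsResolventAt A z R) (hS : IsResolventAt A w S)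
    (h : ‖w - z‖ * ‖R‖ ≤ 1 / 2) : ‖S‖ ≤ 2 * ‖R‖ := by
  have hdiff : ‖R - S‖ ≤ 1 / 2 * ‖S‖ := calc
    ‖R - S‖ = ‖w - z‖ * ‖R * S‖ := by rw [hR.sub_eq_smul_mul hS, norm_smul]
    _ ≤ ‖w - z‖ * (‖R‖ * ‖S‖) := by gcongr; exact norm_mul_le R S
    _ = ‖w - z‖ * ‖R‖ * ‖S‖ := by ring
    _ ≤ 1 / 2 * ‖S‖ := by gcongr
  linarith [norm_sub_norm_le S R, norm_sub_rev R S]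

theorem exists_norm_le_of_isCompact {s : Set 𝕜} (hs : IsCompact s)
    (hA : ∀ z ∈ s, ∃ R, IsResolventAt A z R) :
    ∃ C : ℝ, ∀ z ∈ s, ∀ R, IsResolventAt A z R → ‖R‖ ≤ C := by
  refine hs.induction_on (p := fun s => ∃ C : ℝ, ∀ z ∈ s, ∀ R, IsResolventAt A z R → ‖R‖ ≤ C)
    ⟨0, by simp⟩ ?_ ?_ ?_
  · rintro s t hst ⟨C, hC⟩
    exact ⟨C, fun z hz => hC z (hst hz)⟩
  · rintro s t ⟨C, hC⟩ ⟨D, hD⟩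
    refine ⟨max C D, ?_⟩
    rintro z (hz | hz) R hR
    · exact (hC z hz R hR).trans (le_max_left _ _)
    · exact (hD z hz R hR).trans (le_max_right _ _)
  · intro z hz
    obtain ⟨R, hR⟩ := hA z hz
    have hcont : Continuous fun w : 𝕜 => ‖w - z‖ * ‖R‖ := by fun_prop
    have hnear : ∀ᶠ w in 𝓝 z, ‖w - z‖ * ‖R‖ < 1 / 2 :=
      (hcont.tendsto z).eventually_lt_const (by simp)
    exact ⟨_, mem_nhdsWithin_of_mem_nhds hnear, 2 * ‖R‖,
      fun w (hw : _ < _) S hS => hR.norm_le_two_mul hS hw.le⟩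

theorem mul_inv_one_add_smul (hR : IsResolventAt A z R) {e : 𝕜} (N : (E →L[𝕜] E)ˣ)
    (hN : (N : E →L[𝕜] E) = 1 + e • R) :
    IsResolventAt A (z + e) (R * (↑N⁻¹ : E →L[𝕜] E)) where
  left_inv u := by
    have h : (z + e) • (u : E) - A u = (N : E →L[𝕜] E) (z • (u : E) - A u) := by
      rw [hN, add_apply, smul_apply, hR.left_inv,
        one_apply_eq_self]
      module
    rw [h, ← mul_apply_eq_comp, mul_assoc, N.inv_mul, mul_one, hR.left_inv]
  right_inv v := by
    obtain ⟨u, hu, huv⟩ := hR.right_inv ((↑N⁻¹ : E →L[𝕜] E) v)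
    refine ⟨u, hu, ?_⟩
    calc (z + e) • (u : E) - A u
        = (1 + e • R) (z • (u : E) - A u) := by
          rw [add_apply, smul_apply, hR.left_inv,
            one_apply_eq_self]
          module
      _ = ((N : E →L[𝕜] E) * (↑N⁻¹ : E →L[𝕜] E)) v := by
          rw [← hN, huv, mul_apply_eq_comp]
      _ = v := by rw [N.mul_inv, one_apply_eq_self]

end IsResolventAt

end Resolvent

theorem exists_norm_resolvent_le_one_add_abs_rpow {E : Type*} [NormedAddCommGroup E]
    [NormedSpace ℂ E] {A : E →ₗ.[ℂ] E} {R : ℝ → E →L[ℂ] E}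
    (hR : ∀ l : ℝ, IsResolventAt A (Complex.I * l) (R l)) {C p : ℝ} (hp : 0 ≤ p)
    (hC : ∀ l : ℝ, 1 ≤ |l| → ‖R l‖ ≤ C * |l| ^ p) :
    ∃ K ≥ 0, ∀ l : ℝ, ‖R l‖ ≤ K * (1 + |l|) ^ p := by
  have hcompact : IsCompact ((fun l : ℝ => Complex.I * l) '' Icc (-1) 1) :=
    isCompact_Icc.image (by fun_prop)
  obtain ⟨D, hD⟩ := IsResolventAt.exists_norm_le_of_isCompact hcompact
    (forall_mem_image.2 fun l _ => ⟨R l, hR l⟩)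
  have hK : 0 ≤ max C D := (norm_nonneg (R 0)).trans
    ((hD _ (mem_image_of_mem _ (by norm_num)) _ (hR 0)).trans (le_max_right C D))
  refine ⟨max C D, hK, fun l => ?_⟩
  rcases le_total |l| 1 with hl | hl
  · calc ‖R l‖ ≤ D := hD _ (mem_image_of_mem _ (abs_le.1 hl)) _ (hR l)
      _ ≤ max C D := le_max_right C D
      _ ≤ max C D * (1 + |l|) ^ p :=
        le_mul_of_one_le_right hK (Real.one_le_rpow (by linarith [abs_nonneg l]) hp)
  · calc ‖R l‖ ≤ C * |l| ^ p := hC l hl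
      _ ≤ max C D * (1 + |l|) ^ p := by gcongr <;> simp

section Semigroup

variable {E : Type*} [NormedAddCommGroup E] [NormedSpace ℂ E]

theorem eq_exp_smul_of_hasDerivWithinAt_smul {f : ℝ → E} {z : ℂ}
    (hf : ∀ s ≥ 0, HasDerivWithinAt f (z • f s) (Ici 0) s) {s : ℝ} (hs : 0 ≤ s) :
    f s = Complex.exp (z * s) • f 0 := by
  let g : ℝ → E := fun r => Complex.exp (-z * r) • f r
  have hexp (r : ℝ) : HasDerivAt (fun r : ℝ => Complex.exp (-z * r))
      (Complex.exp (-z * r) * -z) r := by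
    simpa using ((Complex.ofRealCLM.hasDerivAt (x := r)).const_mul (-z)).cexp
  have hg (r : ℝ) (hr : 0 ≤ r) : HasDerivWithinAt g 0 (Ici 0) r := by
    refine ((hexp r).hasDerivWithinAt.smul (hf r hr)).congr_deriv ?_
    module
  have hconst : g s = g 0 := constant_of_has_deriv_right_zero
    (fun r hr => (hg r hr.1).continuousWithinAt.mono Icc_subset_Ici_self)
    (fun r hr => (hg r hr.1).mono (Ici_subset_Ici.2 hr.1)) s ⟨hs, le_rfl⟩
  have hg0 : g 0 = f 0 := by simp [g]
  rw [← hg0, ← hconst, smul_smul, ← Complex.exp_add, neg_mul, add_neg_cancel, Complex.exp_zero,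
    one_smul]

theorem eq_zero_of_hasDerivWithinAt_smul_of_norm_le {f : ℝ → E} {z : ℂ} {c : ℝ} (hz : 0 < z.re)
    (hf : ∀ s ≥ 0, HasDerivWithinAt f (z • f s) (Ici 0) s) (hc : ∀ s ≥ 0, ‖f s‖ ≤ c) :
    f 0 = 0 := by
  have hbound (s : ℝ) (hs : 0 ≤ s) : ‖f 0‖ ≤ Real.exp (-(z.re * s)) * c := by
    have h : Real.exp (z.re * s) * ‖f 0‖ ≤ c := by
      simpa [eq_exp_smul_of_hasDerivWithinAt_smul hf hs, norm_smul, Complex.norm_exp] using hc s hs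
    rwa [Real.exp_neg, inv_mul_eq_div, le_div_iff₀' (Real.exp_pos _)]
  have hlim : Tendsto (fun s => Real.exp (-(z.re * s)) * c) atTop (𝓝 0) := by
    simpa using (Real.tendsto_exp_neg_atTop_nhds_zero.comp
      (tendsto_id.const_mul_atTop hz)).mul_const c
  exact norm_le_zero_iff.1 (ge_of_tendsto hlim ((eventually_ge_atTop 0).mono hbound))

/-- `T` is a one-parameter semigroup on `[0, ∞)`, bounded by `M`, whose generator extends `A`.
The values of `T` at negative times are irrelevant. -/
structure IsBoundedSemigroup (T : ℝ → E →L[ℂ] E) (A : E →ₗ.[ℂ] E) (M : ℝ) : Prop where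
  norm_le : ∀ t ≥ 0, ‖T t‖ ≤ M
  map_zero : T 0 = 1
  map_add : ∀ s ≥ 0, ∀ t ≥ 0, T (s + t) = (T s).comp (T t)
  hasDerivWithinAt : ∀ u : A.domain, ∀ t ≥ 0,
    HasDerivWithinAt (fun s => T s (u : E)) (T t (A u)) (Ici 0) t

namespace IsBoundedSemigroup

variable {T : ℝ → E →L[ℂ] E} {A : E →ₗ.[ℂ] E} {M t : ℝ} {z : ℂ} {R : E →L[ℂ] E}

theorem bound_nonneg (hT : IsBoundedSemigroup T A M) : 0 ≤ M :=
  (norm_nonneg _).trans (hT.norm_le 0 le_rfl)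

theorem norm_apply_le (hT : IsBoundedSemigroup T A M) (ht : 0 ≤ t) (v : E) :
    ‖T t v‖ ≤ M * ‖v‖ :=
  (T t).le_of_opNorm_le (hT.norm_le t ht) v

theorem map_add_apply (hT : IsBoundedSemigroup T A M) {s : ℝ} (hs : 0 ≤ s) (ht : 0 ≤ t) (v : E) :
    T (s + t) v = T s (T t v) := by
  rw [hT.map_add s hs t ht, ContinuousLinearMap.comp_apply]

theorem comp_mul_left (hT : IsBoundedSemigroup T A M) {a : ℝ} (ha : 0 ≤ a) :
    IsBoundedSemigroup (fun s => T (a * s)) ((a : ℂ) • A) M where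
  norm_le t ht := hT.norm_le _ (mul_nonneg ha ht)
  map_zero := by rw [mul_zero, hT.map_zero]
  map_add s hs t ht := by rw [mul_add, hT.map_add _ (mul_nonneg ha hs) _ (mul_nonneg ha ht)]
  hasDerivWithinAt u t ht := by
    have h := (hT.hasDerivWithinAt u (a * t) (mul_nonneg ha ht)).scomp t
      ((hasDerivWithinAt_id t (Ici 0)).const_mul a) fun s hs => mul_nonneg ha hs
    refine h.congr_deriv ?_
    rw [mul_one, LinearPMap.smul_apply, map_smul, Complex.coe_smul]

theorem hasDerivWithinAt_comp_add_const (hT : IsBoundedSemigroup T A M) (ht : 0 ≤ t)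
    (u : A.domain) {s : ℝ} (hs : 0 ≤ s) :
    HasDerivWithinAt (fun r => T (r + t) (u : E)) (T (s + t) (A u)) (Ici 0) s := by
  have h := (hT.hasDerivWithinAt u (s + t) (add_nonneg hs ht)).scomp s
    ((hasDerivWithinAt_id s (Ici 0)).add_const t) fun r hr => add_nonneg hr ht
  simpa only [one_smul] using! h

-- `T s (T t R v - R T t v)` solves `f' = z f` and is bounded, so it vanishes.
theorem commute_of_re_pos (hT : IsBoundedSemigroup T A M) (hR : IsResolventAt A z R)
    (hz : 0 < z.re) (ht : 0 ≤ t) : Commute (T t) R := by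
  ext v
  obtain ⟨u, hu, huv⟩ := hR.right_inv v
  obtain ⟨y, hy, hyv⟩ := hR.right_inv (T t v)
  let f : ℝ → E := fun s => T (s + t) (u : E) - T s (y : E)
  have hf (s : ℝ) (hs : 0 ≤ s) : HasDerivWithinAt f (z • f s) (Ici 0) s := by
    refine ((hT.hasDerivWithinAt_comp_add_const ht u hs).sub
      (hT.hasDerivWithinAt y s hs)).congr_deriv ?_
    have hAu : A u = z • (u : E) - v := by rw [← huv]; abel
    have hAy : A y = z • (y : E) - T t v := by rw [← hyv]; abel
    simp only [f, hAu, hAy, map_sub, map_smul, hT.map_add_apply hs ht]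
    module
  have hbound (s : ℝ) (hs : 0 ≤ s) : ‖f s‖ ≤ M * ‖(u : E)‖ + M * ‖(y : E)‖ :=
    (norm_sub_le _ _).trans
      (add_le_add (hT.norm_apply_le (add_nonneg hs ht) _) (hT.norm_apply_le hs _))
  have hf0 : T t (u : E) - y = 0 := by
    simpa [f, hT.map_zero] using eq_zero_of_hasDerivWithinAt_smul_of_norm_le hz hf hbound
  rw [mul_apply_eq_comp, mul_apply_eq_comp, hu, hy]
  exact sub_eq_zero.1 hf0

variable [CompleteSpace E]

-- For small `e > 0` the resolvent at `z + e` is `R N⁻¹` with `N = 1 + e R`, and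
-- `e R N⁻¹ = 1 - N⁻¹`.
theorem commute_of_re_nonneg (hT : IsBoundedSemigroup T A M) (hR : IsResolventAt A z R)
    (hz : 0 ≤ z.re) (ht : 0 ≤ t) : Commute (T t) R := by
  obtain ⟨e, he, hsmall⟩ : ∃ e : ℝ, 0 < e ∧ e * ‖R‖ < 1 := by
    refine ⟨(‖R‖ + 1)⁻¹, by positivity, ?_⟩
    rw [inv_mul_eq_div, div_lt_one (by positivity)]
    exact lt_add_one _
  have hnorm : ‖-((e : ℂ) • R)‖ < 1 := by
    rwa [norm_neg, norm_smul, Complex.norm_real, Real.norm_of_nonneg he.le]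
  let N : (E →L[ℂ] E)ˣ := Units.oneSub (-((e : ℂ) • R)) hnorm
  have hN : (N : E →L[ℂ] E) = 1 + (e : ℂ) • R := by simp [N]
  have he0 : (e : ℂ) ≠ 0 := Complex.ofReal_ne_zero.2 he.ne'
  have hS : Commute (T t) (R * (↑N⁻¹ : E →L[ℂ] E)) :=
    hT.commute_of_re_pos (hR.mul_inv_one_add_smul N hN) (by simpa using by linarith) ht
  have hNinv : (↑N⁻¹ : E →L[ℂ] E) = 1 - (e : ℂ) • (R * (↑N⁻¹ : E →L[ℂ] E)) := by
    rw [eq_sub_iff_add_eq, ← smul_mul_assoc]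
    nth_rewrite 1 [← one_mul (↑N⁻¹ : E →L[ℂ] E)]
    rw [← add_mul, ← hN, N.mul_inv]
  have hcomm : Commute (T t) (↑N⁻¹ : E →L[ℂ] E) := by
    rw [hNinv]
    exact (Commute.one_right _).sub_right (hS.smul_right _)
  have heR : R = (e : ℂ)⁻¹ • ((N : E →L[ℂ] E) - 1) := by
    rw [hN, add_sub_cancel_left, inv_smul_smul₀ he0]
  rw [heR]
  exact (((Commute.units_inv_right_iff).1 hcomm).sub_right (Commute.one_right _)).smul_right _

theorem exists_mem_domain_eq_apply (hT : IsBoundedSemigroup T A M) (hR : IsResolventAt A z R)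
    (hz : 0 ≤ z.re) (ht : 0 ≤ t) (u : A.domain) :
    ∃ w : A.domain, (w : E) = T t (u : E) ∧ A w = T t (A u) := by
  obtain ⟨w, hw, hwv⟩ := hR.right_inv (T t (z • (u : E) - A u))
  have hcomm : R (T t (z • (u : E) - A u)) = T t (R (z • (u : E) - A u)) :=
    (DFunLike.congr_fun (hT.commute_of_re_nonneg hR hz ht).eq _).symm
  have hwu : (w : E) = T t (u : E) := by rw [← hw, hcomm, hR.left_inv]
  refine ⟨w, hwu, ?_⟩
  rw [hwu, map_sub, map_smul] at hwv
  exact sub_right_injective hwv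

end IsBoundedSemigroup

end Semigroup

section Fourier

section Plancherel

variable {V F : Type*} [NormedAddCommGroup V] [InnerProductSpace ℝ V] [FiniteDimensional ℝ V]
  [MeasurableSpace V] [BorelSpace V] [NormedAddCommGroup F]

theorem continuous_fourier [NormedSpace ℂ F] {f : V → F} (hf : Integrable f) :
    Continuous (𝓕 f) :=
  VectorFourier.fourierIntegral_continuous Real.continuous_fourierChar (L := innerₗ V)
    continuous_inner hf

variable [InnerProductSpace ℂ F] [CompleteSpace F] {f : V → F}

theorem integral_smul_fourier_eq_integral_smul_fourier_toLp (hf : Integrable f)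
    (hf2 : MemLp f 2) (φ : 𝓢(V, ℂ)) :
    ∫ ξ, φ ξ • 𝓕 f ξ =
      ∫ ξ, φ ξ • (𝓕 (hf2.toLp f) : Lp F 2 (volume : Measure V)) ξ := by
  have hflip : ∫ x, 𝓕 (φ : V → ℂ) x • f x = ∫ x, φ x • 𝓕 f x := by
    simpa using! VectorFourier.integral_fourierIntegral_smul_eq_flip (L := innerₗ V)
      Real.continuous_fourierChar continuous_inner (φ.integrable (μ := volume)) hf
  calc ∫ ξ, φ ξ • 𝓕 f ξ = ∫ x, 𝓕 φ x • f x := by rw [SchwartzMap.fourier_coe, hflip]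
    _ = ∫ x, 𝓕 φ x • hf2.toLp f x := integral_congr_ae <| by
        filter_upwards [hf2.coeFn_toLp] with x hx
        rw [hx]
    _ = ∫ ξ, φ ξ • (𝓕 (hf2.toLp f) : Lp F 2 (volume : Measure V)) ξ := by
        rw [← Lp.toTemperedDistribution_apply, ← TemperedDistribution.fourier_apply,
          Lp.fourier_toTemperedDistribution_eq, Lp.toTemperedDistribution_apply]

theorem fourier_ae_eq_fourier_toLp (hf : Integrable f) (hf2 : MemLp f 2) :
    𝓕 f =ᵐ[volume] (𝓕 (hf2.toLp f) : Lp F 2 (volume : Measure V)) := by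
  refine ae_eq_of_integral_contDiff_smul_eq (continuous_fourier hf).locallyIntegrable
    ((Lp.memLp _).locallyIntegrable (by norm_num)) fun g hg hgs => ?_
  have hsupp : HasCompactSupport fun x => (g x : ℂ) :=
    hgs.comp_left (g := Complex.ofReal) Complex.ofReal_zero
  have hsmooth : ContDiff ℝ ∞ fun x => (g x : ℂ) := Complex.ofRealCLM.contDiff.comp hg
  simpa using integral_smul_fourier_eq_integral_smul_fourier_toLp hf hf2
    (hsupp.toSchwartzMap hsmooth)

theorem eLpNorm_fourier_eq (hf : Integrable f) (hf2 : MemLp f 2) :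
    eLpNorm (𝓕 f) 2 = eLpNorm f 2 := by
  rw [eLpNorm_congr_ae (fourier_ae_eq_fourier_toLp hf hf2), ← Lp.enorm_def,
    ← Lp.enorm_toLp hf2, ← ofReal_norm, ← ofReal_norm, Lp.norm_fourier_eq]

end Plancherel

theorem eLpNorm_one_add_mul_norm_fourier_le {F : Type*} [NormedAddCommGroup F]
    [InnerProductSpace ℂ F] [CompleteSpace F] {f : ℝ → F} (hd : Differentiable ℝ f)
    (hf : Integrable f) (hf2 : MemLp f 2) (hf' : Integrable (deriv f)) (hf'2 : MemLp (deriv f) 2)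
    {a : ℝ} (ha : 0 ≤ a) :
    eLpNorm (fun ξ => (1 + a * |2 * Real.pi * ξ|) * ‖𝓕 f ξ‖) 2 ≤
      eLpNorm f 2 + ENNReal.ofReal a * eLpNorm (deriv f) 2 := by
  have hderiv (ξ : ℝ) : ‖𝓕 (deriv f) ξ‖ = |2 * Real.pi * ξ| * ‖𝓕 f ξ‖ := by
    rw [Real.fourier_deriv hf hd hf', norm_smul]
    simp [abs_mul]
  have hsplit : (fun ξ => (1 + a * |2 * Real.pi * ξ|) * ‖𝓕 f ξ‖) =
      (fun ξ => ‖𝓕 f ξ‖) + a • fun ξ => ‖𝓕 (deriv f) ξ‖ := by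
    ext ξ
    simp only [Pi.add_apply, Pi.smul_apply, smul_eq_mul, hderiv]
    ring
  rw [hsplit, ← eLpNorm_fourier_eq hf hf2, ← eLpNorm_fourier_eq hf' hf'2]
  refine (eLpNorm_add_le (continuous_fourier hf).norm.aestronglyMeasurable
    ((continuous_fourier hf').norm.const_smul a).aestronglyMeasurable one_le_two).trans ?_
  rw [eLpNorm_const_smul, eLpNorm_norm, eLpNorm_norm, Real.enorm_of_nonneg ha]

section CauchyProblem

variable {E : Type*} [NormedAddCommGroup E] [NormedSpace ℂ E]

theorem fourier_add_of_integrable {f g : ℝ → E} (hf : Integrable f) (hg : Integrable g) :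
    𝓕 (f + g) = 𝓕 f + 𝓕 g :=
  VectorFourier.fourierIntegral_add Real.continuous_fourierChar (L := innerₗ ℝ)
    continuous_inner hf hg

theorem fourier_const_smul (c : ℂ) (f : ℝ → E) : 𝓕 (c • f) = c • 𝓕 f :=
  VectorFourier.fourierIntegral_const_smul Real.fourierChar volume (innerₗ ℝ) f c

variable [CompleteSpace E]

theorem fourier_continuousLinearMap_comp {f : ℝ → E} (hf : Integrable f) (R : E →L[ℂ] E) (x : ℝ) :
    𝓕 (fun s => R (f s)) x = R (𝓕 f x) := by
  rw [Real.fourier_eq, Real.fourier_eq,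
    ← R.integral_comp_comm ((Real.fourierIntegral_convergent_iff x).2 hf)]
  simp only [Circle.smul_def, map_smul]

theorem fourier_eq_resolvent_apply_fourier {f g : ℝ → E} {A : E →ₗ.[ℂ] E} {R : E →L[ℂ] E} {x : ℝ}
    (hR : IsResolventAt A (Complex.I * (2 * Real.pi * x : ℝ)) R)
    (hd : Differentiable ℝ f) (hf : Integrable f) (hf' : Integrable (deriv f)) (hg : Integrable g)
    (heq : ∀ s, ∃ w : A.domain, (w : E) = f s ∧ deriv f s = A w + g s) :
    𝓕 f x = R (𝓕 g x) := by
  let z : ℂ := Complex.I * (2 * Real.pi * x : ℝ)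
  have hfR : f = fun s => R ((z • f + (-1 : ℂ) • deriv f + g) s) := by
    ext s
    obtain ⟨w, hw, hws⟩ := heq s
    have h : (z • f + (-1 : ℂ) • deriv f + g) s = z • (w : E) - A w := by
      simp only [Pi.add_apply, Pi.smul_apply, hws, hw]
      module
    rw [h, hR.left_inv, hw]
  have hcancel : 𝓕 (z • f + (-1 : ℂ) • deriv f + g) x = 𝓕 g x := by
    rw [fourier_add_of_integrable ((hf.smul z).add (hf'.smul (-1 : ℂ))) hg,
      fourier_add_of_integrable (hf.smul z) (hf'.smul (-1 : ℂ)), fourier_const_smul,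
      fourier_const_smul, Real.fourier_deriv hf hd hf']
    have hz : z = 2 * Real.pi * Complex.I * x := by
      simp only [z, Complex.ofReal_mul, Complex.ofReal_ofNat]
      ring
    simp only [Pi.add_apply, Pi.smul_apply, Pi.neg_apply, hz, neg_smul, one_smul, add_neg_cancel,
      zero_add]
  calc 𝓕 f x = 𝓕 (fun s => R ((z • f + (-1 : ℂ) • deriv f + g) s)) x := by rw [← hfR]
    _ = R (𝓕 g x) := by
      rw [fourier_continuousLinearMap_comp (((hf.smul z).add (hf'.smul (-1 : ℂ))).add hg), hcancel]

end CauchyProblem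

end Fourier

section LocalizedOrbit

/-- A smooth cutoff function on the time interval `(0, 1)`. It is complex valued, so that it acts
on the domains of complex linear operators. -/
structure IsCutoff (χ : ℝ → ℂ) : Prop where
  contDiff : ContDiff ℝ ∞ χ
  tsupport_subset : tsupport χ ⊆ Ioo 0 1

namespace IsCutoff

variable {χ : ℝ → ℂ}

theorem deriv (hχ : IsCutoff χ) : IsCutoff (deriv χ) where
  contDiff := (contDiff_infty_iff_deriv.1 hχ.contDiff).2
  tsupport_subset := tsupport_deriv_subset.trans hχ.tsupport_subset

theorem iteratedDeriv (hχ : IsCutoff χ) (k : ℕ) : IsCutoff (iteratedDeriv k χ) := by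
  induction k with
  | zero => rwa [iteratedDeriv_zero]
  | succ k ih => rw [iteratedDeriv_succ]; exact ih.deriv

theorem hasCompactSupport (hχ : IsCutoff χ) : HasCompactSupport χ :=
  isCompact_Icc.of_isClosed_subset (isClosed_tsupport χ)
    (hχ.tsupport_subset.trans Ioo_subset_Icc_self)

theorem support_subset (hχ : IsCutoff χ) : Function.support χ ⊆ Ioo 0 1 :=
  (subset_tsupport χ).trans hχ.tsupport_subset

theorem exists_norm_iteratedDeriv_le (hχ : IsCutoff χ) (n : ℕ) :
    ∃ B, ∀ j ≤ n, ∀ s, ‖_root_.iteratedDeriv j χ s‖ ≤ B := by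
  choose C hC using fun j =>
    (hχ.iteratedDeriv j).contDiff.continuous.bounded_above_of_compact_support
      (hχ.iteratedDeriv j).hasCompactSupport
  obtain ⟨B, hB⟩ := ((finite_Iic n).image C).bddAbove
  exact ⟨B, fun j hj s => (hC j s).trans (hB (mem_image_of_mem C hj))⟩

theorem exists_eq_one : ∃ χ : ℝ → ℂ, IsCutoff χ ∧ ∀ s ∈ Icc (3 / 8 : ℝ) (5 / 8), χ s = 1 := by
  let b : ContDiffBump (1 / 2 : ℝ) := ⟨1 / 8, 1 / 4, by norm_num, by norm_num⟩
  refine ⟨fun s => (b s : ℂ), ⟨Complex.ofRealCLM.contDiff.comp b.contDiff, ?_⟩, fun s hs => ?_⟩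
  · calc tsupport (fun s => (b s : ℂ)) ⊆ tsupport b := tsupport_comp_subset Complex.ofReal_zero b
      _ = Icc (1 / 2 - 1 / 4) (1 / 2 + 1 / 4) := by rw [b.tsupport_eq, Real.closedBall_eq_Icc]
      _ ⊆ Ioo 0 1 := Icc_subset_Ioo (by norm_num) (by norm_num)
  · have hmem : s ∈ Metric.closedBall (1 / 2 : ℝ) b.rIn := by
      rw [Real.closedBall_eq_Icc]
      exact Icc_subset_Icc (by norm_num [b]) (by norm_num [b]) hs
    simp only [b.one_of_mem_closedBall hmem, Complex.ofReal_one]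

end IsCutoff

theorem eLpNorm_le_ofReal_of_support_subset {α F : Type*} {m : MeasurableSpace α} {μ : Measure α}
    [NormedAddCommGroup F] {f : α → F} {s : Set α} {c : ℝ} (hs : Function.support f ⊆ s)
    (hμ : μ s ≤ 1) (hc : ∀ x, ‖f x‖ ≤ c) (q : ℝ≥0∞) : eLpNorm f q μ ≤ ENNReal.ofReal c := by
  calc eLpNorm f q μ = eLpNorm f q (μ.restrict s) :=
        (eLpNorm_restrict_eq_of_support_subset hs).symm
    _ ≤ μ.restrict s univ ^ q.toReal⁻¹ * ENNReal.ofReal c :=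
        eLpNorm_le_of_ae_bound (ae_of_all _ hc)
    _ ≤ ENNReal.ofReal c := by
        rw [Measure.restrict_apply_univ]
        exact mul_le_of_le_one_left' (ENNReal.rpow_le_one hμ (by positivity))

variable {E : Type*} [NormedAddCommGroup E] [NormedSpace ℂ E]

/-- The orbit `s ↦ T s v` localized in time by the cutoff `χ`. -/
def localizedOrbit (T : ℝ → E →L[ℂ] E) (χ : ℝ → ℂ) (v : E) (s : ℝ) : E :=
  χ s • T s v

theorem IsCutoff.hasCompactSupport_localizedOrbit {T : ℝ → E →L[ℂ] E} {χ : ℝ → ℂ}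
    (hχ : IsCutoff χ) (v : E) :
    HasCompactSupport (localizedOrbit T χ v) :=
  hχ.hasCompactSupport.smul_right

theorem IsCutoff.support_localizedOrbit_subset {T : ℝ → E →L[ℂ] E} {χ : ℝ → ℂ}
    (hχ : IsCutoff χ) (v : E) :
    Function.support (localizedOrbit T χ v) ⊆ Icc 0 1 :=
  (Function.support_smul_subset_left χ _).trans (hχ.support_subset.trans Ioo_subset_Icc_self)

namespace IsBoundedSemigroup

variable {T : ℝ → E →L[ℂ] E} {A : E →ₗ.[ℂ] E} {M B : ℝ} {χ : ℝ → ℂ}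

theorem hasDerivAt_localizedOrbit (hT : IsBoundedSemigroup T A M) (hχ : IsCutoff χ)
    (u : A.domain) (s : ℝ) :
    HasDerivAt (localizedOrbit T χ u)
      (localizedOrbit T χ (A u) s + localizedOrbit T (deriv χ) u s) s := by
  by_cases hs : s ∈ tsupport χ
  · have hs0 : 0 < s := (hχ.tsupport_subset hs).1
    have hχs : HasDerivAt χ (deriv χ s) s :=
      (hχ.contDiff.differentiable (by simp) s).hasDerivAt
    exact hχs.smul ((hT.hasDerivWithinAt u s hs0.le).hasDerivAt (Ici_mem_nhds hs0))
  · have hnear : localizedOrbit T χ u =ᶠ[𝓝 s] fun _ => 0 := by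
      filter_upwards [notMem_tsupport_iff_eventuallyEq.1 hs] with r hr
      rw [localizedOrbit, hr, Pi.zero_apply, zero_smul]
    have hχs : χ s = 0 := image_eq_zero_of_notMem_tsupport hs
    have hχs' : deriv χ s = 0 :=
      image_eq_zero_of_notMem_tsupport fun h => hs (tsupport_deriv_subset h)
    refine ((hasDerivAt_const s 0).congr_of_eventuallyEq hnear).congr_deriv ?_
    simp only [localizedOrbit, hχs, hχs', zero_smul, add_zero]

theorem differentiable_localizedOrbit (hT : IsBoundedSemigroup T A M) (hχ : IsCutoff χ)
    (u : A.domain) : Differentiable ℝ (localizedOrbit T χ u) :=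
  fun s => (hT.hasDerivAt_localizedOrbit hχ u s).differentiableAt

theorem norm_localizedOrbit_le (hT : IsBoundedSemigroup T A M) (hχ : IsCutoff χ)
    (hB : ∀ s, ‖χ s‖ ≤ B) (v : E) (s : ℝ) : ‖localizedOrbit T χ v s‖ ≤ B * (M * ‖v‖) := by
  have hB0 : 0 ≤ B := (norm_nonneg _).trans (hB 0)
  by_cases hs : s ∈ tsupport χ
  · rw [localizedOrbit, norm_smul]
    exact mul_le_mul (hB s) (hT.norm_apply_le (hχ.tsupport_subset hs).1.le v) (norm_nonneg _) hB0
  · rw [localizedOrbit, image_eq_zero_of_notMem_tsupport hs, zero_smul, norm_zero]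
    have := hT.bound_nonneg
    positivity

theorem norm_deriv_localizedOrbit_le (hT : IsBoundedSemigroup T A M) (hχ : IsCutoff χ)
    (hB : ∀ s, ‖χ s‖ ≤ B) (hB' : ∀ s, ‖deriv χ s‖ ≤ B) (u : A.domain) (s : ℝ) :
    ‖deriv (localizedOrbit T χ u) s‖ ≤ B * (M * (‖A u‖ + ‖(u : E)‖)) := by
  rw [(hT.hasDerivAt_localizedOrbit hχ u s).deriv, mul_add, mul_add]
  exact norm_add_le_of_le (hT.norm_localizedOrbit_le hχ hB (A u) s)
    (hT.norm_localizedOrbit_le hχ.deriv hB' u s)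

theorem exists_localizedOrbit_eq [CompleteSpace E] (hT : IsBoundedSemigroup T A M)
    (hχ : IsCutoff χ) {R : E →L[ℂ] E} {z : ℂ} (hR : IsResolventAt A z R) (hz : 0 ≤ z.re)
    (u : A.domain) (s : ℝ) :
    ∃ w : A.domain, (w : E) = localizedOrbit T χ u s ∧ A w = localizedOrbit T χ (A u) s := by
  by_cases hs : s ∈ tsupport χ
  · obtain ⟨w, hw, hAw⟩ := hT.exists_mem_domain_eq_apply hR hz (hχ.tsupport_subset hs).1.le u
    exact ⟨χ s • w, by rw [Submodule.coe_smul, hw, localizedOrbit],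
      by rw [A.map_smul, hAw, localizedOrbit]⟩
  · have hχs : χ s = 0 := image_eq_zero_of_notMem_tsupport hs
    exact ⟨0, by simp [localizedOrbit, hχs], by simp [localizedOrbit, hχs]⟩

theorem memLp_localizedOrbit (hT : IsBoundedSemigroup T A M) (hχ : IsCutoff χ) (u : A.domain)
    (q : ℝ≥0∞) : MemLp (localizedOrbit T χ u) q := by
  have hcont := (hT.differentiable_localizedOrbit hχ u).continuous
  exact hcont.memLp_of_hasCompactSupport (hχ.hasCompactSupport_localizedOrbit (u : E))

theorem integrable_localizedOrbit (hT : IsBoundedSemigroup T A M) (hχ : IsCutoff χ)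
    (u : A.domain) : Integrable (localizedOrbit T χ u) :=
  memLp_one_iff_integrable.1 (hT.memLp_localizedOrbit hχ u 1)

theorem memLp_deriv_localizedOrbit [CompleteSpace E] (hT : IsBoundedSemigroup T A M)
    (hχ : IsCutoff χ) (u : A.domain) (q : ℝ≥0∞) : MemLp (deriv (localizedOrbit T χ u)) q := by
  obtain ⟨B, hB⟩ := hχ.exists_norm_iteratedDeriv_le 1
  have hbound := hT.norm_deriv_localizedOrbit_le hχ (by simpa using hB 0 zero_le_one)
    (by simpa using hB 1 le_rfl) u
  exact (hχ.hasCompactSupport_localizedOrbit _).deriv.memLp_of_bound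
    (aestronglyMeasurable_deriv _ _) _ (ae_of_all _ hbound)

theorem integrable_deriv_localizedOrbit [CompleteSpace E] (hT : IsBoundedSemigroup T A M)
    (hχ : IsCutoff χ) (u : A.domain) : Integrable (deriv (localizedOrbit T χ u)) :=
  memLp_one_iff_integrable.1 (hT.memLp_deriv_localizedOrbit hχ u 1)

theorem fourier_localizedOrbit_eq_apply_fourier_deriv [CompleteSpace E]
    (hT : IsBoundedSemigroup T A M) (hχ : IsCutoff χ) {R : E →L[ℂ] E} {ξ : ℝ}
    (hR : IsResolventAt A (Complex.I * (2 * Real.pi * ξ : ℝ)) R) (u : A.domain) :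
    𝓕 (localizedOrbit T χ u) ξ = R (𝓕 (localizedOrbit T (deriv χ) u) ξ) := by
  refine fourier_eq_resolvent_apply_fourier hR (hT.differentiable_localizedOrbit hχ u)
    (hT.integrable_localizedOrbit hχ u) (hT.integrable_deriv_localizedOrbit hχ u)
    (hT.integrable_localizedOrbit hχ.deriv u) fun s => ?_
  obtain ⟨w, hw, hAw⟩ := hT.exists_localizedOrbit_eq hχ hR (by simp) u s
  exact ⟨w, hw, by rw [hAw, (hT.hasDerivAt_localizedOrbit hχ u s).deriv]⟩

theorem norm_fourier_localizedOrbit_le_pow_mul [CompleteSpace E]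
    (hT : IsBoundedSemigroup T A M) (hχ : IsCutoff χ) {R : E →L[ℂ] E} {ξ : ℝ}
    (hR : IsResolventAt A (Complex.I * (2 * Real.pi * ξ : ℝ)) R) (u : A.domain) (k : ℕ) :
    ‖𝓕 (localizedOrbit T χ u) ξ‖ ≤
      ‖R‖ ^ k * ‖𝓕 (localizedOrbit T (iteratedDeriv k χ) u) ξ‖ := by
  induction k with
  | zero => rw [pow_zero, one_mul, iteratedDeriv_zero]
  | succ k ih =>
    rw [hT.fourier_localizedOrbit_eq_apply_fourier_deriv (hχ.iteratedDeriv k) hR u,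
      ← iteratedDeriv_succ] at ih
    calc ‖𝓕 (localizedOrbit T χ u) ξ‖
        ≤ ‖R‖ ^ k * ‖R (𝓕 (localizedOrbit T (iteratedDeriv (k + 1) χ) u) ξ)‖ := ih
      _ ≤ ‖R‖ ^ k * (‖R‖ * ‖𝓕 (localizedOrbit T (iteratedDeriv (k + 1) χ) u) ξ‖) := by
        gcongr
        exact R.le_opNorm _
      _ = ‖R‖ ^ (k + 1) * ‖𝓕 (localizedOrbit T (iteratedDeriv (k + 1) χ) u) ξ‖ := by ring

theorem norm_apply_one_le_mul_norm_localizedOrbit (hT : IsBoundedSemigroup T A M) {s : ℝ}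
    (hs : s ∈ Icc (0 : ℝ) 1) (hχs : χ s = 1) (v : E) :
    ‖T 1 v‖ ≤ M * ‖localizedOrbit T χ v s‖ := by
  rw [localizedOrbit, hχs, one_smul, ← sub_add_cancel 1 s,
    hT.map_add_apply (sub_nonneg.2 hs.2) hs.1]
  exact hT.norm_apply_le (sub_nonneg.2 hs.2) _

theorem ofReal_norm_apply_one_div_two_le (hT : IsBoundedSemigroup T A M)
    (hone : ∀ s ∈ Icc (3 / 8 : ℝ) (5 / 8), χ s = 1) (v : E) :
    ENNReal.ofReal (‖T 1 v‖ / 2) ≤ ENNReal.ofReal M * eLpNorm (localizedOrbit T χ v) 2 := by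
  let I : Set ℝ := Icc (3 / 8) (5 / 8)
  have hle (s : ℝ) : ‖I.indicator (fun _ => T 1 v) s‖ ≤ M * ‖localizedOrbit T χ v s‖ := by
    by_cases hs : s ∈ I
    · rw [indicator_of_mem hs]
      have hs01 : s ∈ Icc (0 : ℝ) 1 := Icc_subset_Icc (by norm_num) (by norm_num) hs
      exact hT.norm_apply_one_le_mul_norm_localizedOrbit hs01 (hone s hs) v
    · rw [indicator_of_notMem hs, norm_zero]
      exact mul_nonneg hT.bound_nonneg (norm_nonneg _)
  have hmeasure : volume I ^ (1 / (2 : ℝ≥0∞).toReal) = ENNReal.ofReal (1 / 2) := by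
    rw [Real.volume_Icc, ENNReal.toReal_ofNat,
      ENNReal.ofReal_rpow_of_nonneg (by norm_num) (by norm_num), ← Real.sqrt_eq_rpow,
      show (5 / 8 - 3 / 8 : ℝ) = (1 / 2) ^ 2 by norm_num, Real.sqrt_sq (by norm_num)]
  have hnorm : eLpNorm (I.indicator fun _ => T 1 v) 2 = ENNReal.ofReal (‖T 1 v‖ / 2) := by
    rw [eLpNorm_indicator_const measurableSet_Icc two_ne_zero ENNReal.ofNat_ne_top, hmeasure,
      ← ofReal_norm, ← ENNReal.ofReal_mul (norm_nonneg _), mul_one_div]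
  rw [← hnorm]
  exact eLpNorm_le_mul_eLpNorm_of_ae_le_mul (ae_of_all _ hle) 2

end IsBoundedSemigroup

end LocalizedOrbit

section PolynomialDecay

variable {H : Type*} [NormedAddCommGroup H] [InnerProductSpace ℂ H] [CompleteSpace H]

namespace IsBoundedSemigroup

variable {T : ℝ → H →L[ℂ] H} {A : H →ₗ.[ℂ] H} {M B a δ : ℝ} {χ : ℝ → ℂ} {k : ℕ}

theorem eLpNorm_one_add_mul_norm_fourier_localizedOrbit_le (hT : IsBoundedSemigroup T A M)
    (hχ : IsCutoff χ) (hB : ∀ s, ‖χ s‖ ≤ B) (hB' : ∀ s, ‖deriv χ s‖ ≤ B) (ha : 0 ≤ a)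
    (u : A.domain) :
    eLpNorm (fun ξ => (1 + a * |2 * Real.pi * ξ|) * ‖𝓕 (localizedOrbit T χ u) ξ‖) 2 ≤
      ENNReal.ofReal (B * M * ((1 + a) * ‖(u : H)‖ + a * ‖A u‖)) := by
  have hM := hT.bound_nonneg
  have hB0 : 0 ≤ B := (norm_nonneg _).trans (hB 0)
  have hsupp := hχ.support_localizedOrbit_subset (T := T) (u : H)
  have hvol : volume (Icc (0 : ℝ) 1) ≤ 1 := by simp
  have hf : eLpNorm (localizedOrbit T χ u) 2 ≤ ENNReal.ofReal (B * (M * ‖(u : H)‖)) :=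
    eLpNorm_le_ofReal_of_support_subset hsupp hvol (hT.norm_localizedOrbit_le hχ hB u) 2
  have hf' : eLpNorm (deriv (localizedOrbit T χ u)) 2 ≤
      ENNReal.ofReal (B * (M * (‖A u‖ + ‖(u : H)‖))) :=
    eLpNorm_le_ofReal_of_support_subset
      (support_deriv_subset.trans (closure_minimal hsupp isClosed_Icc)) hvol
      (hT.norm_deriv_localizedOrbit_le hχ hB hB' u) 2
  calc eLpNorm (fun ξ => (1 + a * |2 * Real.pi * ξ|) * ‖𝓕 (localizedOrbit T χ u) ξ‖) 2 volume
      ≤ eLpNorm (localizedOrbit T χ u) 2 volume +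
          ENNReal.ofReal a * eLpNorm (deriv (localizedOrbit T χ u)) 2 volume :=
        eLpNorm_one_add_mul_norm_fourier_le (hT.differentiable_localizedOrbit hχ u)
          (hT.integrable_localizedOrbit hχ u) (hT.memLp_localizedOrbit hχ u 2)
          (hT.integrable_deriv_localizedOrbit hχ u) (hT.memLp_deriv_localizedOrbit hχ u 2) ha
    _ ≤ ENNReal.ofReal (B * (M * ‖(u : H)‖)) +
          ENNReal.ofReal a * ENNReal.ofReal (B * (M * (‖A u‖ + ‖(u : H)‖))) := by gcongr
    _ = ENNReal.ofReal (B * M * ((1 + a) * ‖(u : H)‖ + a * ‖A u‖)) := by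
        rw [← ENNReal.ofReal_mul ha, ← ENNReal.ofReal_add (by positivity) (by positivity)]
        ring_nf

-- Interpolates between the trivial bound and the one given by `k` applications of the resolvent.
theorem norm_fourier_localizedOrbit_le (hT : IsBoundedSemigroup T A M) (hχ : IsCutoff χ)
    {R : H →L[ℂ] H} {ξ c : ℝ} (hR : IsResolventAt A (Complex.I * (2 * Real.pi * ξ : ℝ)) R)
    (hc : min 1 (‖R‖ ^ k) ≤ c) (u : A.domain) :
    ‖𝓕 (localizedOrbit T χ u) ξ‖ ≤
      c * (‖𝓕 (localizedOrbit T χ u) ξ‖ + ‖𝓕 (localizedOrbit T (iteratedDeriv k χ) u) ξ‖) := by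
  refine le_trans ?_ (mul_le_mul_of_nonneg_right hc (by positivity))
  rw [min_mul_of_nonneg _ _ (by positivity), one_mul]
  refine le_min (le_add_of_nonneg_right (norm_nonneg _))
    ((hT.norm_fourier_localizedOrbit_le_pow_mul hχ hR u k).trans ?_)
  gcongr
  exact le_add_of_nonneg_left (norm_nonneg _)

theorem eLpNorm_localizedOrbit_le (hT : IsBoundedSemigroup T A M) (hχ : IsCutoff χ)
    (hB : ∀ j ≤ k + 1, ∀ s, ‖iteratedDeriv j χ s‖ ≤ B) {R : ℝ → H →L[ℂ] H}
    (hR : ∀ l : ℝ, IsResolventAt A (Complex.I * l) (R l)) (ha : 0 ≤ a) (hδ : 0 ≤ δ)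
    (hmin : ∀ l : ℝ, min 1 (‖R l‖ ^ k) ≤ δ * (1 + a * |l|)) (u : A.domain) :
    eLpNorm (localizedOrbit T χ u) 2 ≤
      ENNReal.ofReal (2 * M * B * δ * ((1 + a) * ‖(u : H)‖ + a * ‖A u‖)) := by
  have hM := hT.bound_nonneg
  have hB0 : 0 ≤ B := (norm_nonneg _).trans (hB 0 (Nat.zero_le _) 0)
  let N : ℝ := B * M * ((1 + a) * ‖(u : H)‖ + a * ‖A u‖)
  let W : (ℝ → ℂ) → ℝ → ℝ := fun ψ ξ =>
    (1 + a * |2 * Real.pi * ξ|) * ‖𝓕 (localizedOrbit T ψ u) ξ‖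
  have hW (j : ℕ) (hj : j ≤ k) : eLpNorm (W (iteratedDeriv j χ)) 2 ≤ ENNReal.ofReal N :=
    hT.eLpNorm_one_add_mul_norm_fourier_localizedOrbit_le (hχ.iteratedDeriv j) (hB j (by lia))
      (by simpa only [iteratedDeriv_succ] using hB (j + 1) (by lia)) ha u
  have hWcont (j : ℕ) : Continuous (W (iteratedDeriv j χ)) :=
    (by fun_prop : Continuous fun ξ : ℝ => 1 + a * |2 * Real.pi * ξ|).mul
      (continuous_fourier (hT.integrable_localizedOrbit (hχ.iteratedDeriv j) u)).norm
  have hpointwise (ξ : ℝ) : ‖𝓕 (localizedOrbit T χ u) ξ‖ ≤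
      δ * ‖(W (iteratedDeriv 0 χ) + W (iteratedDeriv k χ)) ξ‖ := by
    calc ‖𝓕 (localizedOrbit T χ u) ξ‖ ≤ δ * (1 + a * |2 * Real.pi * ξ|) *
          (‖𝓕 (localizedOrbit T χ u) ξ‖ + ‖𝓕 (localizedOrbit T (iteratedDeriv k χ) u) ξ‖) :=
          hT.norm_fourier_localizedOrbit_le hχ (hR _) (hmin _) u
      _ = δ * (W (iteratedDeriv 0 χ) + W (iteratedDeriv k χ)) ξ := by
          simp only [W, iteratedDeriv_zero, Pi.add_apply]
          ring
      _ ≤ δ * ‖(W (iteratedDeriv 0 χ) + W (iteratedDeriv k χ)) ξ‖ := by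
          gcongr
          exact Real.le_norm_self _
  calc eLpNorm (localizedOrbit T χ u) 2 volume
      = eLpNorm (𝓕 (localizedOrbit T χ u)) 2 volume :=
        (eLpNorm_fourier_eq (hT.integrable_localizedOrbit hχ u)
          (hT.memLp_localizedOrbit hχ u 2)).symm
    _ ≤ ENNReal.ofReal δ * eLpNorm (W (iteratedDeriv 0 χ) + W (iteratedDeriv k χ)) 2 volume :=
        eLpNorm_le_mul_eLpNorm_of_ae_le_mul (ae_of_all _ hpointwise) 2
    _ ≤ ENNReal.ofReal δ * (ENNReal.ofReal N + ENNReal.ofReal N) := by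
        gcongr
        exact (eLpNorm_add_le (hWcont 0).aestronglyMeasurable (hWcont k).aestronglyMeasurable
          one_le_two).trans (add_le_add (hW 0 (Nat.zero_le k)) (hW k le_rfl))
    _ = ENNReal.ofReal (2 * M * B * δ * ((1 + a) * ‖(u : H)‖ + a * ‖A u‖)) := by
        rw [← ENNReal.ofReal_add (by positivity) (by positivity), ← ENNReal.ofReal_mul hδ]
        congr 1
        ring

theorem norm_apply_one_le (hT : IsBoundedSemigroup T A M) (hχ : IsCutoff χ)
    (hone : ∀ s ∈ Icc (3 / 8 : ℝ) (5 / 8), χ s = 1)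
    (hB : ∀ j ≤ k + 1, ∀ s, ‖iteratedDeriv j χ s‖ ≤ B) {R : ℝ → H →L[ℂ] H}
    (hR : ∀ l : ℝ, IsResolventAt A (Complex.I * l) (R l)) (ha : 0 ≤ a) (hδ : 0 ≤ δ)
    (hmin : ∀ l : ℝ, min 1 (‖R l‖ ^ k) ≤ δ * (1 + a * |l|)) (u : A.domain) :
    ‖T 1 (u : H)‖ ≤ 4 * M ^ 2 * B * δ * ((1 + a) * ‖(u : H)‖ + a * ‖A u‖) := by
  have hM := hT.bound_nonneg
  have hB0 : 0 ≤ B := (norm_nonneg _).trans (hB 0 (Nat.zero_le _) 0)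
  have h : ENNReal.ofReal (‖T 1 (u : H)‖ / 2) ≤
      ENNReal.ofReal (M * (2 * M * B * δ * ((1 + a) * ‖(u : H)‖ + a * ‖A u‖))) := by
    rw [ENNReal.ofReal_mul hM]
    refine (hT.ofReal_norm_apply_one_div_two_le hone u).trans ?_
    gcongr
    exact hT.eLpNorm_localizedOrbit_le hχ hB hR ha hδ hmin u
  linarith [(ENNReal.ofReal_le_ofReal_iff (by positivity)).1 h]

theorem norm_apply_le_rpow (hT : IsBoundedSemigroup T A M) (hχ : IsCutoff χ)
    (hone : ∀ s ∈ Icc (3 / 8 : ℝ) (5 / 8), χ s = 1)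
    (hB : ∀ j ≤ k + 1, ∀ s, ‖iteratedDeriv j χ s‖ ≤ B) {R : ℝ → H →L[ℂ] H}
    (hR : ∀ l : ℝ, IsResolventAt A (Complex.I * l) (R l)) {K p : ℝ} (hK : 0 ≤ K) (hp : 0 < p)
    (hpk : 1 / p ≤ k) (hRK : ∀ l : ℝ, ‖R l‖ ≤ K * (1 + |l|) ^ p) (u : A.domain) {t : ℝ}
    (ht : 1 ≤ t) :
    ‖T t (u : H)‖ ≤
      8 * M ^ 2 * B * K ^ (1 / p) * t ^ (-(1 / p)) * (‖(u : H)‖ + ‖A u‖) := by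
  have ht0 : 0 < t := zero_lt_one.trans_le ht
  have hB0 : 0 ≤ B := (norm_nonneg _).trans (hB 0 (Nat.zero_le _) 0)
  have htc : (t : ℂ) ≠ 0 := Complex.ofReal_ne_zero.2 ht0.ne'
  have hR' (l : ℝ) :
      IsResolventAt ((t : ℂ) • A) (Complex.I * l) ((t : ℂ)⁻¹ • R (t⁻¹ * l)) := by
    have hz : Complex.I * l = t * (Complex.I * (t⁻¹ * l : ℝ)) := by
      push_cast
      field_simp
    rw [hz]
    exact (hR _).smul htc
  have hmin (l : ℝ) : min 1 (‖(t : ℂ)⁻¹ • R (t⁻¹ * l)‖ ^ k) ≤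
      K ^ (1 / p) * t ^ (-(1 / p)) * (1 + t⁻¹ * |l|) := by
    refine min_one_pow_le_of_le_mul_rpow (norm_nonneg _) hK ht0 (by positivity) hp hpk ?_
    have habs : |t⁻¹ * l| = t⁻¹ * |l| := by rw [abs_mul, abs_of_pos (inv_pos.2 ht0)]
    rw [norm_smul, norm_inv, Complex.norm_real, Real.norm_of_nonneg ht0.le, ← habs]
    gcongr
    exact hRK _
  have hgraph : (1 + t⁻¹) * ‖(u : H)‖ + t⁻¹ * ‖((t : ℂ) • A) u‖ ≤
      2 * (‖(u : H)‖ + ‖A u‖) := by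
    rw [LinearPMap.smul_apply, norm_smul, Complex.norm_real, Real.norm_of_nonneg ht0.le,
      inv_mul_cancel_left₀ ht0.ne']
    nlinarith [inv_le_one_of_one_le₀ ht, norm_nonneg (u : H), norm_nonneg (A u)]
  calc ‖T t (u : H)‖ = ‖T (t * 1) (u : H)‖ := by rw [mul_one]
    _ ≤ 4 * M ^ 2 * B * (K ^ (1 / p) * t ^ (-(1 / p))) *
          ((1 + t⁻¹) * ‖(u : H)‖ + t⁻¹ * ‖((t : ℂ) • A) u‖) :=
        (hT.comp_mul_left ht0.le).norm_apply_one_le hχ hone hB hR' (by positivity)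
          (by positivity) hmin u
    _ ≤ 4 * M ^ 2 * B * (K ^ (1 / p) * t ^ (-(1 / p))) * (2 * (‖(u : H)‖ + ‖A u‖)) := by gcongr
    _ = 8 * M ^ 2 * B * K ^ (1 / p) * t ^ (-(1 / p)) * (‖(u : H)‖ + ‖A u‖) := by ring

end IsBoundedSemigroup

end PolynomialDecay

/-- Borichev–Tomilov: if A generates a bounded C₀-semigroup T on a Hilbert space,
iℝ ⊂ ρ(A), and ‖(iλ - A)⁻¹‖ ≤ C|λ|^p for |λ| ≥ 1, then the semigroup decays
polynomially: ‖T(t)u‖ ≤ M t^{-1/p}(‖u‖ + ‖Au‖) for u ∈ D(A) and t ≥ 1. -/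
theorem stmt15 {H : Type*} [NormedAddCommGroup H] [InnerProductSpace ℂ H] [CompleteSpace H]
    (T : ℝ → H →L[ℂ] H) (A : H →ₗ.[ℂ] H)
    (M₀ : ℝ) (hbdd : ∀ t ≥ (0:ℝ), ‖T t‖ ≤ M₀)
    (hT0 : T 0 = 1)
    (hsemi : ∀ s ≥ (0:ℝ), ∀ t ≥ (0:ℝ), T (s + t) = (T s).comp (T t))
    (hgen : ∀ u : A.domain, ∀ t ≥ (0:ℝ),
      HasDerivAt (fun s => T s (u : H)) (T t (A u)) t)
    (C p : ℝ) (hC : 0 < C) (hp : 0 < p)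
    (hres : ∀ lam : ℝ, ∃ R : H →L[ℂ] H,
      (∀ u : A.domain, R ((Complex.I * lam) • (u : H) - A u) = u) ∧
      (∀ v : H, ∃ u : A.domain, R v = u ∧ (Complex.I * lam) • (u : H) - A u = v) ∧
      (1 ≤ |lam| → ‖R‖ ≤ C * |lam| ^ p)) :
    ∃ M > (0:ℝ), ∀ u : A.domain, ∀ t ≥ (1:ℝ),
      ‖T t (u : H)‖ ≤ M * t ^ (-(1 / p)) * (‖(u : H)‖ + ‖A u‖) := by
  choose R hleft hright hbound using hres
  have hT : IsBoundedSemigroup T A M₀ :=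
    ⟨hbdd, hT0, hsemi, fun u t ht => (hgen u t ht).hasDerivWithinAt⟩
  have hR (l : ℝ) : IsResolventAt A (Complex.I * l) (R l) := ⟨hleft l, hright l⟩
  obtain ⟨K, hK, hRK⟩ := exists_norm_resolvent_le_one_add_abs_rpow hR hp.le hbound
  obtain ⟨χ, hχ, hone⟩ := IsCutoff.exists_eq_one
  obtain ⟨k, hk⟩ := exists_nat_ge (1 / p)
  obtain ⟨B, hB⟩ := hχ.exists_norm_iteratedDeriv_le (k + 1)
  have hB0 : 0 ≤ B := (norm_nonneg _).trans (hB 0 (Nat.zero_le _) 0)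
  refine ⟨8 * M₀ ^ 2 * B * K ^ (1 / p) + 1, by positivity, fun u t ht => ?_⟩
  calc ‖T t (u : H)‖
      ≤ 8 * M₀ ^ 2 * B * K ^ (1 / p) * t ^ (-(1 / p)) * (‖(u : H)‖ + ‖A u‖) :=
        hT.norm_apply_le_rpow hχ hone hB hR hK hp hk hRK u ht
    _ ≤ (8 * M₀ ^ 2 * B * K ^ (1 / p) + 1) * t ^ (-(1 / p)) * (‖(u : H)‖ + ‖A u‖) := by
        gcongr
        exact le_add_of_nonneg_right zero_le_one
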